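/- Let 0 < ε ≤ 1, b > 0, and let a : ℕ → E be an ℓ-margitron run of length T. Then T ≤ ((1/ε)·A + B^(1/ε))·(ln((1/ε)·A + B^(1/ε)))^(1−ε), where A = (2 + ε − 2·⌊ε⌋)·R²/γ_d² and B = (1+ε)·b/γ_d^(1+ε), and ⌊ε⌋ is the integer part of ε. -/

import Mathlib

open scoped RealInnerProductSpace

/-!
Along a run `γd * t ≤ ‖a t‖`, because every update gains at least `γd` in the direction `u`, while
misclassification gives `‖a (t + 1)‖ ^ 2 ≤ ‖a t‖ ^ 2 + R ^ 2 + 2 * b * ‖a t‖ ^ (1 - ε)`.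
Raising the latter to the power `(1 + ε) / 2` by concavity makes the `b`-term constant and leaves
a term of order `‖a t‖ ^ (ε - 1) ≤ (γd * t) ^ (ε - 1)`. Summing, and comparing
`∑ j ^ (ε - 1)` with the harmonic sum by Jensen's inequality, one gets, for `ρ = R ^ 2 / γd ^ 2`,
`T ≤ B * T ^ (1 - ε) + ρ * (1 + (1 + ε) / 2 * (1 + log T) ^ (1 - ε))`.
Weighted AM-GM absorbs `B * T ^ (1 - ε)` into `ε * B ^ (1 / ε) + (1 - ε) * T`. In the logarithmic
inequality that remains, with `M = A / ε + B ^ (1 / ε)`, a ratio `τ = T / M > (log M) ^ (1 - ε)`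
would give `(1 + log T) ^ (1 - ε) ≤ 2 * τ` and hence `T < M * τ`; this is where the factor
`2 + ε = 1 + 2 * ((1 + ε) / 2)` in `A` comes from.
-/

section RealInequalities

lemma rpow_add_le_rpow_add_mul_rpow_sub_one {p x δ : ℝ} (hp : 0 ≤ p) (hp1 : p ≤ 1) (hx : 0 < x)
    (hδ : -x ≤ δ) : (x + δ) ^ p ≤ x ^ p + p * x ^ (p - 1) * δ := by
  have hδx : -1 ≤ δ / x := by rwa [le_div_iff₀ hx, neg_one_mul]
  calc (x + δ) ^ p = (x * (1 + δ / x)) ^ p := by rw [mul_add, mul_one, mul_div_cancel₀ δ hx.ne']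
    _ = x ^ p * (1 + δ / x) ^ p := Real.mul_rpow hx.le (by linarith)
    _ ≤ x ^ p * (1 + p * (δ / x)) := by
        gcongr
        exact rpow_one_add_le_one_add_mul_self hδx hp hp1
    _ = x ^ p + p * x ^ (p - 1) * δ := by rw [Real.rpow_sub_one hx.ne']; ring

lemma rpow_one_add_le_of_sq_le {ε b c x x' : ℝ} (hε : -1 ≤ ε) (hε1 : ε ≤ 1) (hx : 0 < x)
    (hx' : 0 ≤ x') (h : x' ^ 2 ≤ x ^ 2 + (c + 2 * b * x ^ (1 - ε))) :
    x' ^ (1 + ε) ≤ x ^ (1 + ε) + (1 + ε) * b + (1 + ε) / 2 * c * x ^ (ε - 1) := by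
  have sq_rpow {z : ℝ} (hz : 0 ≤ z) (q : ℝ) : (z ^ 2) ^ q = z ^ (2 * q) := by
    rw [← Real.rpow_two, ← Real.rpow_mul hz]
  have hcancel : x ^ (ε - 1) * x ^ (1 - ε) = 1 := by
    rw [← Real.rpow_add hx, sub_add_sub_cancel, sub_self, Real.rpow_zero]
  calc x' ^ (1 + ε) = (x' ^ 2) ^ ((1 + ε) / 2) := by rw [sq_rpow hx']; ring_nf
    _ ≤ (x ^ 2 + (c + 2 * b * x ^ (1 - ε))) ^ ((1 + ε) / 2) := by gcongr; linarith
    _ ≤ (x ^ 2) ^ ((1 + ε) / 2)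
          + (1 + ε) / 2 * (x ^ 2) ^ ((1 + ε) / 2 - 1) * (c + 2 * b * x ^ (1 - ε)) :=
        rpow_add_le_rpow_add_mul_rpow_sub_one (by linarith) (by linarith) (by positivity)
          (by linarith [sq_nonneg x'])
    _ = x ^ (1 + ε) + (1 + ε) / 2 * x ^ (ε - 1) * (c + 2 * b * x ^ (1 - ε)) := by
        rw [sq_rpow hx.le, sq_rpow hx.le]; ring_nf
    _ = x ^ (1 + ε) + (1 + ε) * b + (1 + ε) / 2 * c * x ^ (ε - 1) := by
        linear_combination (1 + ε) * b * hcancel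

lemma sum_rpow_le_card_rpow_mul_sum_rpow {ι : Type*} (s : Finset ι) {f : ι → ℝ} {p : ℝ}
    (hp : 0 ≤ p) (hp1 : p ≤ 1) (hf : ∀ i ∈ s, 0 ≤ f i) :
    ∑ i ∈ s, f i ^ p ≤ (s.card : ℝ) ^ (1 - p) * (∑ i ∈ s, f i) ^ p := by
  rcases s.eq_empty_or_nonempty with rfl | hs
  · rw [Finset.sum_empty]; positivity
  have hcard : (0 : ℝ) < s.card := by exact_mod_cast hs.card_pos
  have jensen := (Real.concaveOn_rpow hp hp1).le_map_sum (t := s) (w := fun _ ↦ (s.card : ℝ)⁻¹)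
    (p := f) (fun _ _ ↦ by positivity) (by simp [hcard.ne']) hf
  simp only [smul_eq_mul, ← Finset.mul_sum] at jensen
  rw [Real.mul_rpow (by positivity) (Finset.sum_nonneg hf), inv_mul_le_iff₀ hcard,
    Real.inv_rpow hcard.le] at jensen
  rwa [Real.rpow_sub hcard, Real.rpow_one, div_eq_mul_inv, mul_assoc]

lemma sum_range_rpow_sub_one_le {ε : ℝ} (hε : 0 ≤ ε) (hε1 : ε ≤ 1) (n : ℕ) :
    ∑ j ∈ Finset.range n, ((j : ℝ) + 1) ^ (ε - 1) ≤ (n : ℝ) ^ ε * (1 + Real.log n) ^ (1 - ε) := by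
  have hharm : ∑ j ∈ Finset.range n, ((j : ℝ) + 1)⁻¹ ≤ 1 + Real.log n := by
    simpa [harmonic] using harmonic_le_one_add_log n
  calc ∑ j ∈ Finset.range n, ((j : ℝ) + 1) ^ (ε - 1)
      = ∑ j ∈ Finset.range n, ((j : ℝ) + 1)⁻¹ ^ (1 - ε) := by
        refine Finset.sum_congr rfl fun j _ ↦ ?_
        rw [Real.inv_rpow (by positivity), ← Real.rpow_neg (by positivity), neg_sub]
    _ ≤ ((Finset.range n).card : ℝ) ^ (1 - (1 - ε))
          * (∑ j ∈ Finset.range n, ((j : ℝ) + 1)⁻¹) ^ (1 - ε) :=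
        sum_rpow_le_card_rpow_mul_sum_rpow _ (by linarith) (by linarith)
          fun _ _ ↦ by positivity
    _ ≤ (n : ℝ) ^ ε * (1 + Real.log n) ^ (1 - ε) := by
        rw [Finset.card_range, sub_sub_cancel]
        gcongr

lemma le_rpow_one_div_add_div_of_le_mul_rpow_add {ε B c x : ℝ} (hε : 0 < ε) (hε1 : ε ≤ 1)
    (hB : 0 ≤ B) (hx : 0 ≤ x) (h : x ≤ B * x ^ (1 - ε) + c) : x ≤ B ^ (1 / ε) + c / ε := by
  have amgm : (B ^ (1 / ε)) ^ ε * x ^ (1 - ε) ≤ ε * B ^ (1 / ε) + (1 - ε) * x :=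
    Real.geom_mean_le_arith_mean2_weighted hε.le (by linarith) (by positivity) hx (by ring)
  rw [← Real.rpow_mul hB, one_div_mul_cancel hε.ne', Real.rpow_one] at amgm
  rw [← sub_le_iff_le_add', le_div_iff₀ hε]
  linarith

lemma one_add_add_log_rpow_le_two_mul {p l τ : ℝ} (hp : 0 < p) (hp1 : p ≤ 1) (hl : 1 ≤ l)
    (hτ : l ^ p ≤ τ) : (1 + l + Real.log τ) ^ p ≤ 2 * τ := by
  have hτ1 : 1 ≤ τ := (Real.one_le_rpow hl hp.le).trans hτ
  obtain ⟨σ, hlσ, rfl⟩ : ∃ σ, l ≤ σ ∧ σ ^ p = τ :=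
    ⟨τ ^ p⁻¹, (Real.le_rpow_inv_iff_of_pos (by linarith) (by linarith) hp).mpr hτ,
      Real.rpow_inv_rpow (by linarith) hp.ne'⟩
  have hlog : Real.log (σ ^ p) ≤ σ - 1 := by
    rw [Real.log_rpow (by linarith)]
    exact (mul_le_of_le_one_left (Real.log_nonneg (by linarith)) hp1).trans
      (Real.log_le_sub_one_of_pos (by linarith))
  have hbase : 1 + l + Real.log (σ ^ p) ≤ 2 * σ := by linarith
  calc (1 + l + Real.log (σ ^ p)) ^ p ≤ (2 * σ) ^ p := by
        gcongr
        linarith [Real.log_nonneg hτ1]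
    _ = 2 ^ p * σ ^ p := Real.mul_rpow (by norm_num) (by linarith)
    _ ≤ 2 * σ ^ p := by
        gcongr
        exact Real.rpow_le_self_of_one_le (by norm_num) hp1

lemma le_mul_log_rpow_of_le {p C D q T : ℝ} (hp : 0 < p) (hp1 : p ≤ 1) (hC : 0 < C) (hD : 0 ≤ D)
    (hq : 0 ≤ q) (hM : Real.exp 1 ≤ C * (1 + 2 * q) + D)
    (h : T ≤ D + C * (1 + q * (1 + Real.log T) ^ p)) :
    T ≤ (C * (1 + 2 * q) + D) * Real.log (C * (1 + 2 * q) + D) ^ p := by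
  set M := C * (1 + 2 * q) + D with hM_def
  have hM0 : 0 < M := by positivity
  have hl : 1 ≤ Real.log M := (Real.le_log_iff_exp_le hM0).mpr hM
  by_contra! hlt
  obtain ⟨τ, rfl⟩ : ∃ τ, T = M * τ := ⟨T / M, by field_simp⟩
  have hτ : Real.log M ^ p < τ := lt_of_mul_lt_mul_left hlt hM0.le
  have hτ1 : 1 < τ := (Real.one_le_rpow hl hp.le).trans_lt hτ
  have hlog : (1 + Real.log (M * τ)) ^ p ≤ 2 * τ := by
    rw [Real.log_mul hM0.ne' (by linarith), ← add_assoc]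
    exact one_add_add_log_rpow_le_two_mul hp hp1 hl hτ.le
  refine lt_irrefl (M * τ) ?_
  calc M * τ ≤ D + C * (1 + q * (2 * τ)) := h.trans (by gcongr)
    _ < D * τ + C * (τ + q * (2 * τ)) :=
        add_lt_add_of_le_of_lt (le_mul_of_one_le_right hD hτ1.le) (by gcongr)
    _ = M * τ := by rw [hM_def]; ring

end RealInequalities

section Margitron

variable {E ι : Type*} [NormedAddCommGroup E] [InnerProductSpace ℝ E] {y : ι → E} {u : E}
  {R γd ε b : ℝ} {T : ℕ} {a : ℕ → E}

/-- A run of length `T` of the `ℓ`-margitron on the patterns `y`: starting from `0`, each of the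
first `T` updates adds a pattern that the current weight vector misclassifies. The values of `a`
beyond `T` are unconstrained. The case `t = 0` is separate because the threshold
`b * ‖a t‖ ^ (1 - ε)` would be `b * 0 ^ 0 = b` there when `ε = 1`. -/
structure IsMargitronRun (y : ι → E) (b ε : ℝ) (T : ℕ) (a : ℕ → E) : Prop where
  zero : a 0 = 0
  update : ∀ t < T, ∃ k, a (t + 1) = a t + y k ∧
    ⟪a t, y k⟫ ≤ if t = 0 then 0 else b * ‖a t‖ ^ (1 - ε)

lemma margin_le_norm {γ : ℝ} {v : E} (hu : ‖u‖ = 1) (hv : γ ≤ ⟪u, v⟫) : γ ≤ ‖v‖ :=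
  hv.trans ((real_inner_le_norm u v).trans_eq (by rw [hu, one_mul]))

namespace IsMargitronRun

lemma mul_margin_le_norm (h : IsMargitronRun y b ε T a) (hu : ‖u‖ = 1)
    (hmargin : ∀ k, γd ≤ ⟪u, y k⟫) {t : ℕ} (ht : t ≤ T) : t * γd ≤ ‖a t‖ := by
  refine margin_le_norm hu ?_
  induction t with
  | zero => simp [h.zero]
  | succ t ih =>
    obtain ⟨k, hk, -⟩ := h.update t ht
    rw [hk, inner_add_right]
    push_cast
    linarith [ih (by omega), hmargin k]

lemma norm_one_le (h : IsMargitronRun y b ε T a) (hR : ∀ k, ‖y k‖ ≤ R) (hT : 0 < T) :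
    ‖a 1‖ ≤ R := by
  obtain ⟨k, hk, -⟩ := h.update 0 hT
  simpa [hk, h.zero] using hR k

lemma norm_succ_sq_le (h : IsMargitronRun y b ε T a) (hR : ∀ k, ‖y k‖ ≤ R) {t : ℕ}
    (ht0 : t ≠ 0) (ht : t < T) :
    ‖a (t + 1)‖ ^ 2 ≤ ‖a t‖ ^ 2 + (R ^ 2 + 2 * b * ‖a t‖ ^ (1 - ε)) := by
  obtain ⟨k, hk, hmis⟩ := h.update t ht
  rw [if_neg ht0] at hmis
  have hyR : ‖y k‖ ^ 2 ≤ R ^ 2 := by gcongr; exact hR k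
  rw [hk, norm_add_sq_real]
  linarith

lemma norm_succ_rpow_le (h : IsMargitronRun y b ε T a) (hR : ∀ k, ‖y k‖ ≤ R) (hu : ‖u‖ = 1)
    (hγd : 0 < γd) (hmargin : ∀ k, γd ≤ ⟪u, y k⟫) (hε : -1 ≤ ε) (hε1 : ε ≤ 1) {t : ℕ}
    (ht : t < T) :
    ‖a (t + 1)‖ ^ (1 + ε) ≤ R ^ (1 + ε) + (1 + ε) * b * t
      + (1 + ε) / 2 * R ^ 2 * γd ^ (ε - 1) * ∑ j ∈ Finset.range t, ((j : ℝ) + 1) ^ (ε - 1) := by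
  induction t with
  | zero =>
    have hbase : ‖a 1‖ ^ (1 + ε) ≤ R ^ (1 + ε) := by
      gcongr
      · linarith
      · exact h.norm_one_le hR ht
    simpa using hbase
  | succ t ih =>
    have hlow : ((t : ℝ) + 1) * γd ≤ ‖a (t + 1)‖ := by
      exact_mod_cast h.mul_margin_le_norm hu hmargin ht.le
    have hstep := rpow_one_add_le_of_sq_le hε hε1 ((by positivity : (0 : ℝ) < _).trans_le hlow)
      (norm_nonneg _) (h.norm_succ_sq_le hR t.succ_ne_zero ht)
    have hpow : ‖a (t + 1)‖ ^ (ε - 1) ≤ ((t : ℝ) + 1) ^ (ε - 1) * γd ^ (ε - 1) := by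
      rw [← Real.mul_rpow (by positivity) hγd.le]
      exact Real.rpow_le_rpow_of_nonpos (by positivity) hlow (by linarith)
    have hcoef : 0 ≤ (1 + ε) / 2 * R ^ 2 := mul_nonneg (by linarith) (sq_nonneg R)
    rw [Finset.sum_range_succ]
    push_cast
    linarith [ih (by omega), mul_le_mul_of_nonneg_left hpow hcoef]

lemma succ_rpow_le (h : IsMargitronRun y b ε T a) (hR : ∀ k, ‖y k‖ ≤ R) (hu : ‖u‖ = 1)
    (hγd : 0 < γd) (hmargin : ∀ k, γd ≤ ⟪u, y k⟫) (hε : -1 ≤ ε) (hε1 : ε ≤ 1) {t : ℕ}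
    (ht : t < T) :
    ((t : ℝ) + 1) ^ (1 + ε) ≤ R ^ 2 / γd ^ 2 + (1 + ε) * b / γd ^ (1 + ε) * t
      + (1 + ε) / 2 * (R ^ 2 / γd ^ 2) * ∑ j ∈ Finset.range t, ((j : ℝ) + 1) ^ (ε - 1) := by
  have hlow : ((t : ℝ) + 1) * γd ≤ ‖a (t + 1)‖ := by
    exact_mod_cast h.mul_margin_le_norm hu hmargin ht
  have hγR : γd ≤ R := by
    obtain ⟨k, -⟩ := h.update t ht
    exact (margin_le_norm hu (hmargin k)).trans (hR k)
  have hR0 : 0 < R := hγd.trans_le hγR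
  have hpow : γd ^ (ε - 1) = γd ^ (1 + ε) / γd ^ 2 := by
    rw [← Real.rpow_two, ← Real.rpow_sub hγd]; ring_nf
  have hRpow : R ^ (1 + ε) ≤ R ^ 2 * γd ^ (ε - 1) := by
    calc R ^ (1 + ε) = R ^ 2 * R ^ (ε - 1) := by
          rw [← Real.rpow_two, ← Real.rpow_add hR0]; ring_nf
      _ ≤ R ^ 2 * γd ^ (ε - 1) := by
          gcongr ?_ * ?_
          exact Real.rpow_le_rpow_of_nonpos hγd hγR (by linarith)
  rw [← mul_le_mul_iff_left₀ (by positivity : 0 < γd ^ (1 + ε))]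
  calc ((t : ℝ) + 1) ^ (1 + ε) * γd ^ (1 + ε) = (((t : ℝ) + 1) * γd) ^ (1 + ε) :=
        (Real.mul_rpow (by positivity) hγd.le).symm
    _ ≤ ‖a (t + 1)‖ ^ (1 + ε) := by gcongr; linarith
    _ ≤ R ^ 2 * γd ^ (ε - 1) + (1 + ε) * b * t + (1 + ε) / 2 * R ^ 2 * γd ^ (ε - 1)
          * ∑ j ∈ Finset.range t, ((j : ℝ) + 1) ^ (ε - 1) := by
        grw [h.norm_succ_rpow_le hR hu hγd hmargin hε hε1 ht, hRpow]
    _ = _ := by rw [hpow]; field_simp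

lemma length_le_of_eps_eq_one (h : IsMargitronRun y b 1 T a) (hR : ∀ k, ‖y k‖ ≤ R)
    (hu : ‖u‖ = 1) (hγd : 0 < γd) (hmargin : ∀ k, γd ≤ ⟪u, y k⟫) (hb : 0 ≤ b) :
    (T : ℝ) ≤ R ^ 2 / γd ^ 2 + 2 * b / γd ^ 2 := by
  obtain _ | t := T
  · simp only [Nat.cast_zero]; positivity
  have hsq : ((t : ℝ) + 1) ^ 2 ≤ R ^ 2 / γd ^ 2 + 2 * b / γd ^ 2 * t + R ^ 2 / γd ^ 2 * t := by
    simpa [one_add_one_eq_two] using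
      h.succ_rpow_le hR hu hγd hmargin (by norm_num) le_rfl t.lt_succ_self
  have hB : 0 ≤ 2 * b / γd ^ 2 := by positivity
  push_cast
  refine le_of_mul_le_mul_right ?_ (by positivity : (0 : ℝ) < t + 1)
  linarith

lemma length_le_mul_rpow_add (h : IsMargitronRun y b ε T a) (hR : ∀ k, ‖y k‖ ≤ R)
    (hu : ‖u‖ = 1) (hγd : 0 < γd) (hmargin : ∀ k, γd ≤ ⟪u, y k⟫) (hε : 0 ≤ ε) (hε1 : ε ≤ 1)
    (hb : 0 ≤ b) :
    (T : ℝ) ≤ (1 + ε) * b / γd ^ (1 + ε) * (T : ℝ) ^ (1 - ε)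
      + R ^ 2 / γd ^ 2 * (1 + (1 + ε) / 2 * (1 + Real.log T) ^ (1 - ε)) := by
  obtain _ | t := T
  · simp only [Nat.cast_zero, Real.log_zero]; positivity
  have hrun := h.succ_rpow_le hR hu hγd hmargin (by linarith) hε1 t.lt_succ_self
  have hsum := (Finset.sum_le_sum_of_subset_of_nonneg (Finset.range_mono t.le_succ)
    fun j _ _ ↦ by positivity).trans (sum_range_rpow_sub_one_le hε hε1 (t + 1))
  set x : ℝ := ((t + 1 : ℕ) : ℝ) with hx
  have htx : (t : ℝ) ≤ x := by rw [hx]; push_cast; linarith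
  have hx1 : 1 ≤ x := by rw [hx]; push_cast; linarith [t.cast_nonneg (α := ℝ)]
  have hx0 : 0 < x := by linarith
  have hxε : 1 ≤ x ^ ε := Real.one_le_rpow hx1 hε
  have hsplit : x ^ (1 - ε) * x ^ ε = x := by
    rw [← Real.rpow_add hx0, sub_add_cancel, Real.rpow_one]
  rw [← mul_le_mul_iff_left₀ (by positivity : 0 < x ^ ε)]
  calc x * x ^ ε = x ^ (1 + ε) := by rw [Real.rpow_one_add' hx0.le (by linarith)]
    _ ≤ R ^ 2 / γd ^ 2 * 1 + (1 + ε) * b / γd ^ (1 + ε) * t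
        + (1 + ε) / 2 * (R ^ 2 / γd ^ 2) * ∑ j ∈ Finset.range t, ((j : ℝ) + 1) ^ (ε - 1) := by
        rw [mul_one, hx]; exact_mod_cast hrun
    _ ≤ R ^ 2 / γd ^ 2 * x ^ ε + (1 + ε) * b / γd ^ (1 + ε) * x
        + (1 + ε) / 2 * (R ^ 2 / γd ^ 2) * (x ^ ε * (1 + Real.log x) ^ (1 - ε)) := by gcongr
    _ = _ := by linear_combination -((1 + ε) * b / γd ^ (1 + ε)) * hsplit

theorem length_le_mul_log_rpow (h : IsMargitronRun y b ε T a) (hR : ∀ k, ‖y k‖ ≤ R)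
    (hu : ‖u‖ = 1) (hγd : 0 < γd) (hmargin : ∀ k, γd ≤ ⟪u, y k⟫) (hγR : γd ≤ R) (hε : 0 < ε)
    (hε1 : ε < 1) (hb : 0 ≤ b) {A B : ℝ} (hA : A = (2 + ε) * (R ^ 2 / γd ^ 2))
    (hB : B = (1 + ε) * b / γd ^ (1 + ε)) :
    (T : ℝ) ≤ ((1 / ε) * A + B ^ (1 / ε)) *
      Real.log ((1 / ε) * A + B ^ (1 / ε)) ^ (1 - ε) := by
  have hB0 : 0 ≤ B := by rw [hB]; positivity
  have hρ : 1 ≤ R ^ 2 / γd ^ 2 := by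
    rw [one_le_div (by positivity)]
    gcongr
  have hAC : 1 / ε * A = R ^ 2 / γd ^ 2 / ε * (1 + 2 * ((1 + ε) / 2)) := by rw [hA]; ring
  have hA3 : 3 ≤ 1 / ε * A := by
    rw [one_div_mul_eq_div, le_div_iff₀ hε, hA]
    nlinarith
  have hT := le_rpow_one_div_add_div_of_le_mul_rpow_add hε hε1.le hB0 T.cast_nonneg
    (hB ▸ h.length_le_mul_rpow_add hR hu hγd hmargin hε.le hε1.le hb)
  have hD : 0 ≤ B ^ (1 / ε) := by positivity
  rw [hAC] at hA3 ⊢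
  refine le_mul_log_rpow_of_le (by linarith) (by linarith) (by positivity) hD (by linarith) ?_ ?_
  · linarith [Real.exp_one_lt_three]
  · rwa [div_mul_eq_mul_div]

end IsMargitronRun

theorem stmt11_general [Nonempty ι] (hR : ∀ k, ‖y k‖ ≤ R) (hu : ‖u‖ = 1) (hγd : 0 < γd)
    (hmargin : ∀ k, γd ≤ ⟪u, y k⟫) (hε : 0 < ε) (hε1 : ε ≤ 1) (hb : 0 ≤ b)
    (hrun : IsMargitronRun y b ε T a) {A B : ℝ}
    (hA : A = (2 + ε - 2 * (⌊ε⌋ : ℝ)) * (R ^ 2 / γd ^ 2))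
    (hB : B = (1 + ε) * b / γd ^ (1 + ε)) :
    (T : ℝ) ≤ ((1 / ε) * A + B ^ (1 / ε)) *
      (Real.log ((1 / ε) * A + B ^ (1 / ε))) ^ (1 - ε) := by
  rcases hε1.lt_or_eq with hlt | rfl
  · obtain ⟨k⟩ := ‹Nonempty ι›
    have hγR : γd ≤ R := (margin_le_norm hu (hmargin k)).trans (hR k)
    have hfloor : ⌊ε⌋ = 0 := Int.floor_eq_zero_iff.mpr ⟨hε.le, hlt⟩
    rw [hfloor, Int.cast_zero, mul_zero, sub_zero] at hA
    exact hrun.length_le_mul_log_rpow hR hu hγd hmargin hγR hε hlt hb hA hB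
  · have hA1 : A = R ^ 2 / γd ^ 2 := by rw [hA, Int.floor_one]; push_cast; ring
    have hB1 : B = 2 * b / γd ^ 2 := by rw [hB, one_add_one_eq_two, Real.rpow_two]
    simpa [hA1, hB1] using hrun.length_le_of_eps_eq_one hR hu hγd hmargin hb

end Margitron

/-- an ℓ-margitron run of length T with 0 < ε ≤ 1 satisfies
T ≤ ((1/ε)·A + B^(1/ε))·(ln((1/ε)·A + B^(1/ε)))^(1−ε) with
A = (2+ε−2⌊ε⌋)·R²/γ_d², B = (1+ε)·b/γ_d^(1+ε). -/
theorem stmt11 {E : Type*} [NormedAddCommGroup E] [InnerProductSpace ℝ E]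
    {n : ℕ} (hn : 0 < n) (y : Fin n → E)
    (R : ℝ) (hR : IsGreatest (Set.range (fun k : Fin n => ‖y k‖)) R)
    (u : E) (hu : ‖u‖ = 1) (γd : ℝ) (hγd : 0 < γd)
    (hmargin : ∀ k : Fin n, γd ≤ ⟪u, y k⟫)
    (ε b : ℝ) (hε : 0 < ε) (hε1 : ε ≤ 1) (hb : 0 < b)
    (T : ℕ) (a : ℕ → E) (ha0 : a 0 = 0)
    (hrun : ∀ t : ℕ, t < T → ∃ k : Fin n, a (t + 1) = a t + y k ∧
      ⟪a t, y k⟫ ≤ if t = 0 then 0 else b * ‖a t‖ ^ (1 - ε))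
    (A B : ℝ)
    (hA : A = (2 + ε - 2 * (⌊ε⌋ : ℝ)) * (R ^ 2 / γd ^ 2))
    (hB : B = (1 + ε) * b / γd ^ (1 + ε)) :
    (T : ℝ) ≤ ((1 / ε) * A + B ^ (1 / ε)) *
      (Real.log ((1 / ε) * A + B ^ (1 / ε))) ^ (1 - ε) := by
  have : Nonempty (Fin n) := Fin.pos_iff_nonempty.mp hn
  exact stmt11_general (fun k ↦ hR.2 ⟨k, rfl⟩) hu hγd hmargin hε hε1 hb.le ⟨ha0, hrun⟩ hA hB
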